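/- For every integer n ≥ 5, there exists a tree on n vertices that satisfies the neighbour sum property. -/

import Mathlib

/-!
The path on five vertices has the neighbour sum property through the values `1, 1, 0, -1, -1`,
whose middle entry is `0`. Hanging further leaves with value `0` at the middle vertex changes no
neighbour sum: the new leaves see only the middle vertex, and contribute nothing to it. So a
centre `0` carrying the two legs `0 - 1 - 3` and `0 - 2 - 4` together with `n - 5` leaves works
for every `n ≥ 5`.

The tree is given by its parent function; `parentGraph_isTree` shows that any parent function
that strictly decreases away from the root yields a tree: it is connected by induction on the
vertex, and it has at most `n - 1` edges.
-/

/-- A locally finite simple graph satisfies the *neighbour sum property* if there is a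
function `f : V → ℝ`, not identically zero, mapping every vertex to the sum of the
values taken by its neighbours. -/
def SimpleGraph.HasNSP {V : Type*} (G : SimpleGraph V) : Prop :=
  ∃ f : V → ℝ, f ≠ 0 ∧ ∀ x : V, f x = ∑ᶠ y ∈ G.neighborSet x, f y

/-- The graph joining each nonzero vertex `i` to its parent `p i`; the value `p 0` is irrelevant. -/
def parentGraph {m : ℕ} (p : Fin (m + 1) → Fin (m + 1)) : SimpleGraph (Fin (m + 1)) where
  Adj i j := i ≠ j ∧ ((i ≠ 0 ∧ p i = j) ∨ (j ≠ 0 ∧ p j = i))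
  symm := ⟨fun _ _ h => ⟨h.1.symm, h.2.symm⟩⟩
  loopless := ⟨fun _ h => h.1 rfl⟩

lemma parentGraph_isTree {m : ℕ} (p : Fin (m + 1) → Fin (m + 1)) (hp : ∀ i, i ≠ 0 → p i < i) :
    (parentGraph p).IsTree := by
  have hreach : ∀ i, (parentGraph p).Reachable i 0 := by
    intro i
    induction i using WellFoundedLT.induction with
    | ind i ih =>
      by_cases hi : i = 0
      · rw [hi]
      · have hadj : (parentGraph p).Adj i (p i) := ⟨(hp i hi).ne', Or.inl ⟨hi, rfl⟩⟩
        exact hadj.reachable.trans (ih _ (hp i hi))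
  have hconn : (parentGraph p).Connected :=
    { preconnected := fun i j => (hreach i).trans (hreach j).symm }
  rw [SimpleGraph.isTree_iff_connected_and_card]
  refine ⟨hconn, le_antisymm ?_ hconn.card_vert_le_card_edgeSet_add_one⟩
  have hsub : (parentGraph p).edgeSet ⊆ (fun i => s(i, p i)) '' {i | i ≠ 0} := by
    intro e
    induction e with
    | _ i j =>
      intro he
      obtain ⟨-, ⟨hi, rfl⟩ | ⟨hj, rfl⟩⟩ : (parentGraph p).Adj i j := he
      · exact ⟨i, hi, rfl⟩
      · exact ⟨j, hj, Sym2.eq_swap⟩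
  have h1 := Set.ncard_le_ncard hsub (Set.toFinite _)
  have h2 := Set.ncard_image_le (f := fun i => s(i, p i)) (Set.toFinite {i : Fin (m + 1) | i ≠ 0})
  have h3 : ({i : Fin (m + 1) | i ≠ 0}).ncard = m := by
    have := Set.ncard_compl ({0} : Set (Fin (m + 1)))
    simpa [Set.compl_def] using this
  rw [Nat.card_coe_set_eq, Nat.card_eq_fintype_card, Fintype.card_fin]
  omega

/-- The parent function of the tree: `3` hangs at `1`, `4` hangs at `2`, the rest at the centre. -/
def spiderParent (m : ℕ) (i : Fin (m + 5)) : Fin (m + 5) :=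
  if i.val = 3 then ⟨1, by omega⟩ else if i.val = 4 then ⟨2, by omega⟩ else 0

/-- The vertex values: `1` on the leg `1 - 3`, `-1` on the leg `2 - 4`, and `0` elsewhere. -/
noncomputable def spiderValue (m : ℕ) (i : Fin (m + 5)) : ℝ :=
  if i.val = 1 ∨ i.val = 3 then 1 else if i.val = 2 ∨ i.val = 4 then -1 else 0

/-- Only the vertices `1, 2, 3, 4` contribute to a neighbour sum. -/
lemma finsum_spiderValue (m : ℕ) (s : Set (Fin (m + 5))) [DecidablePred (· ∈ s)] :
    ∑ᶠ y ∈ s, spiderValue m y =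
      (if (⟨1, by omega⟩ : Fin (m + 5)) ∈ s then 1 else 0)
      + (if (⟨2, by omega⟩ : Fin (m + 5)) ∈ s then -1 else 0)
      + (if (⟨3, by omega⟩ : Fin (m + 5)) ∈ s then 1 else 0)
      + (if (⟨4, by omega⟩ : Fin (m + 5)) ∈ s then -1 else 0) := by
  have h : ∀ y, (∑ᶠ _ : y ∈ s, spiderValue m y) = if y ∈ s then spiderValue m y else 0 :=
    fun y => finsum_eq_if
  rw [finsum_congr h, finsum_eq_sum_of_fintype]
  rw [Fin.sum_univ_succ, Fin.sum_univ_succ, Fin.sum_univ_succ, Fin.sum_univ_succ,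
    Fin.sum_univ_succ, Finset.sum_eq_zero]
  · simp [spiderValue, Fin.succ, add_assoc]
    rfl
  · intro i _
    simp [spiderValue]

/-- For every `n ≥ 5`, there exists a tree on `n` vertices satisfying the neighbour
sum property. -/
theorem exists_tree_hasNSP (n : ℕ) (hn : 5 ≤ n) :
    ∃ G : SimpleGraph (Fin n), G.IsTree ∧ G.HasNSP := by
  classical
  obtain ⟨m, rfl⟩ : ∃ m, n = m + 5 := ⟨n - 5, by omega⟩
  refine ⟨parentGraph (spiderParent m), parentGraph_isTree _ ?_, spiderValue m, ?_, ?_⟩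
  · intro i hi
    have hi' : i.val ≠ 0 := fun h => hi (Fin.ext h)
    rw [Fin.lt_def, spiderParent]
    split_ifs <;> simp only [Fin.coe_ofNat_eq_mod, Nat.zero_mod] <;> omega
  · intro h
    have := congrFun h ⟨1, by omega⟩
    simp [spiderValue] at this
  · intro x
    rw [finsum_spiderValue]
    obtain ⟨k, hk⟩ := x
    rcases k with _ | _ | _ | _ | _ | k <;>
      simp [spiderValue, parentGraph, spiderParent, Fin.ext_iff, -Fin.val_eq_zero_iff]
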